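/- arXiv:2104.12729 — 2 statements merged into one kernel-verified Lean document; each statement's English description precedes it below -/
import Mathlib

section
/- A permutation π of a finite type α is a square in the symmetric group (i.e. there exists σ : Equiv.Perm α with σ^2 = π) if and only if, for every even natural number l, the multiplicity of l in Equiv.Perm.cycleType π is even. -/
/-!
The `k`-th power of an `n`-cycle splits into `gcd(n, k)` cycles of length `n / gcd(n, k)`. For a
prime `k = p` this leaves the cycles of length prime to `p` intact and breaks every other cycle
into `p` equal parts. Hence in a `p`-th power the cycles of any length divisible by `p` come in
groups of `p`; conversely, such groups are glued back into cycles `p` times as long.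
-/

open Equiv.Perm Finset

theorem exists_eq_filter_not_add_nsmul {β : Type*} [DecidableEq β] (s : Multiset β) {k : ℕ}
    (P : β → Prop) [DecidablePred P] (h : ∀ a, P a → k ∣ s.count a) :
    ∃ t : Multiset β, s = s.filter (¬ P ·) + k • t := by
  obtain ⟨t, ht⟩ := (s.filter P).exists_smul_of_dvd_count fun a ha => by
    rw [Multiset.count_filter_of_pos (Multiset.of_mem_filter ha)]
    exact h a (Multiset.of_mem_filter ha)
  exact ⟨t, by rw [← ht, add_comm, Multiset.filter_add_not]⟩

/-- The cycle type of the `k`-th power of an `n`-cycle. The case `n ∣ k` is separate because cycle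
types omit fixed points, whereas `n / n.gcd k = 1` there. -/
def powCycleType (k n : ℕ) : Multiset ℕ :=
  if n ∣ k then 0 else Multiset.replicate (n.gcd k) (n / n.gcd k)

section PowCycleType

variable {k l m n : ℕ} {s : Multiset ℕ}

theorem powCycleType_of_coprime (hnk : n.Coprime k) (hn : n ≠ 1) : powCycleType k n = {n} := by
  have hdvd : ¬ n ∣ k := fun h => hn (hnk.eq_one_of_dvd h)
  rw [powCycleType, if_neg hdvd, hnk.gcd_eq_one, Nat.div_one, Multiset.replicate_one]

theorem powCycleType_mul_left (hk : 0 < k) (hm : m ≠ 1) :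
    powCycleType k (k * m) = Multiset.replicate k m := by
  have hdvd : ¬ k * m ∣ k := fun h =>
    hm (Nat.dvd_one.1 (Nat.dvd_of_mul_dvd_mul_left hk (by rwa [mul_one])))
  rw [powCycleType, if_neg hdvd, Nat.gcd_mul_right_left, Nat.mul_div_cancel_left m hk]

theorem dvd_count_powCycleType (hl : k ∣ l) : k ∣ (powCycleType k n).count l := by
  rw [powCycleType]
  split_ifs
  · simp
  · rw [Multiset.count_replicate]
    split_ifs with hlength
    · have hkn : k ∣ n := hl.trans (hlength ▸ Nat.div_dvd_of_dvd (Nat.gcd_dvd_left n k))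
      exact Nat.dvd_gcd hkn dvd_rfl
    · exact dvd_zero k

theorem bind_powCycleType_of_coprime (h : ∀ n ∈ s, n.Coprime k) (h_one : ∀ n ∈ s, n ≠ 1) :
    s.bind (powCycleType k) = s := by
  calc s.bind (powCycleType k) = s.bind fun n => {n} :=
        Multiset.bind_congr fun n hn => powCycleType_of_coprime (h n hn) (h_one n hn)
    _ = s := by rw [Multiset.bind_singleton, Multiset.map_id']

theorem bind_powCycleType_map_mul_left (hk : 0 < k) (h_one : ∀ n ∈ s, n ≠ 1) :
    (s.map (k * ·)).bind (powCycleType k) = k • s := by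
  calc (s.map (k * ·)).bind (powCycleType k) = s.bind fun n => k • {n} := by
        rw [Multiset.bind_map]
        refine Multiset.bind_congr fun n hn => ?_
        rw [powCycleType_mul_left hk (h_one n hn), Multiset.nsmul_singleton]
    _ = k • s := by
        rw [Multiset.bind, Multiset.join, Multiset.sum_map_nsmul, Multiset.sum_map_singleton]

end PowCycleType

section Perm

variable {α : Type*} [Fintype α] [DecidableEq α] {π c : Equiv.Perm α} {k l : ℕ}

theorem eq_orderOf_of_mem_cycleType_pow_of_isCycle (hc : c.IsCycle)
    (hl : l ∈ (c ^ k).cycleType) : l = orderOf (c ^ k) := by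
  refine Nat.dvd_antisymm (dvd_of_mem_cycleType hl) (orderOf_dvd_of_pow_eq_one ?_)
  rw [cycleType_def, Multiset.mem_map] at hl
  obtain ⟨f, hf : f ∈ (c ^ k).cycleFactorsFinset, rfl⟩ := hl
  have hf_cycle : f.IsCycle := (mem_cycleFactorsFinset_iff.1 hf).1
  obtain ⟨x, hx⟩ := hf_cycle.nonempty_support
  have hxc : x ∈ c.support := support_pow_le c k (mem_cycleFactorsFinset_support_le hf hx)
  have hfix : ((c ^ k) ^ #f.support) x = x := by
    rw [← cycleOf_pow_apply_self, ← cycle_is_cycleOf hx hf, ← hf_cycle.orderOf, pow_orderOf_eq_one,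
      one_apply]
  rw [← pow_mul] at hfix ⊢
  exact (hc.pow_eq_one_iff' (mem_support.1 hxc)).2 hfix

theorem cycleType_pow_of_isCycle (hc : c.IsCycle) (k : ℕ) :
    (c ^ k).cycleType = powCycleType k #c.support := by
  rw [powCycleType, ← hc.orderOf]
  split_ifs with hdvd
  · rwa [cycleType_eq_zero, ← orderOf_dvd_iff_pow_eq_one]
  · have hreplicate : (c ^ k).cycleType =
        Multiset.replicate (c ^ k).cycleType.card (orderOf (c ^ k)) :=
      Multiset.eq_replicate_card.2 fun _ => eq_orderOf_of_mem_cycleType_pow_of_isCycle hc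
    have hsum : (c ^ k).cycleType.card * orderOf (c ^ k) = orderOf c := by
      rw [← smul_eq_mul, ← Multiset.sum_replicate, ← hreplicate, sum_cycleType,
        hc.support_pow_eq_iff.2 hdvd, hc.orderOf]
    have hcard : (c ^ k).cycleType.card = (orderOf c).gcd k :=
      Nat.eq_of_mul_eq_mul_right (orderOf_pos (c ^ k)) <| by
        rw [hsum, orderOf_pow, Nat.mul_div_cancel' (Nat.gcd_dvd_left _ _)]
    rw [hreplicate, hcard, orderOf_pow]

theorem cycleType_pow (σ : Equiv.Perm α) (k : ℕ) :
    (σ ^ k).cycleType = σ.cycleType.bind (powCycleType k) := by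
  induction σ using cycle_induction_on with
  | base_one => simp
  | base_cycles c hc => rw [cycleType_pow_of_isCycle hc, hc.cycleType, Multiset.singleton_bind]
  | induction_disjoint σ τ hdisj _ ihσ ihτ =>
    rw [hdisj.commute.mul_pow, (hdisj.pow_disjoint_pow k k).cycleType_mul, hdisj.cycleType_mul,
      Multiset.add_bind, ihσ, ihτ]

theorem dvd_count_cycleType_pow (σ : Equiv.Perm α) (hl : k ∣ l) :
    k ∣ (σ ^ k).cycleType.count l := by
  rw [cycleType_pow, Multiset.count_bind]
  refine Multiset.dvd_sum fun _ hcount => ?_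
  obtain ⟨n, -, rfl⟩ := Multiset.mem_map.1 hcount
  exact dvd_count_powCycleType hl

theorem exists_pow_eq_of_cycleType_pow_eq {σ : Equiv.Perm α}
    (h : (σ ^ k).cycleType = π.cycleType) : ∃ ρ : Equiv.Perm α, ρ ^ k = π := by
  obtain ⟨τ, hτ⟩ := isConj_iff.1 (isConj_of_cycleType_eq h)
  exact ⟨τ * σ * τ⁻¹, by rw [conj_pow, hτ]⟩

section Gluing

variable {s t : Multiset ℕ}

theorem exists_cycleType_eq_add_map_mul (hk : 0 < k) (hπ : π.cycleType = s + k • t) :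
    ∃ σ : Equiv.Perm α, σ.cycleType = s + t.map (k * ·) := by
  rw [exists_with_cycleType_iff]
  constructor
  · calc (s + t.map (k * ·)).sum = π.cycleType.sum := by
          rw [hπ, Multiset.sum_add, Multiset.sum_add, Multiset.sum_map_mul_left, Multiset.map_id',
            Multiset.sum_nsmul, smul_eq_mul]
      _ ≤ Fintype.card α := sum_cycleType_le π
  · have two_le : ∀ n ∈ s + k • t, 2 ≤ n := fun n hn => two_le_of_mem_cycleType (hπ ▸ hn)
    intro n hn
    rcases Multiset.mem_add.1 hn with hs | ht
    · exact two_le n (Multiset.mem_add.2 (.inl hs))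
    · obtain ⟨m, hm, rfl⟩ := Multiset.mem_map.1 ht
      have hm_two : 2 ≤ m :=
        two_le m (Multiset.mem_add.2 (.inr ((Multiset.mem_nsmul_of_ne_zero hk.ne').2 hm)))
      exact hm_two.trans (Nat.le_mul_of_pos_left m hk)

theorem exists_pow_eq_of_cycleType_eq_add_nsmul (hk : 0 < k) (hπ : π.cycleType = s + k • t)
    (hs : ∀ n ∈ s, n.Coprime k) : ∃ σ : Equiv.Perm α, σ ^ k = π := by
  have ne_one : ∀ n ∈ s + k • t, n ≠ 1 := fun n hn => (one_lt_of_mem_cycleType (hπ ▸ hn)).ne'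
  have hs_one : ∀ n ∈ s, n ≠ 1 := fun n hn => ne_one n (Multiset.mem_add.2 (.inl hn))
  have ht_one : ∀ n ∈ t, n ≠ 1 := fun n hn =>
    ne_one n (Multiset.mem_add.2 (.inr ((Multiset.mem_nsmul_of_ne_zero hk.ne').2 hn)))
  obtain ⟨σ, hσ⟩ := exists_cycleType_eq_add_map_mul hk hπ
  refine exists_pow_eq_of_cycleType_pow_eq (σ := σ) ?_
  rw [cycleType_pow, hσ, Multiset.add_bind, bind_powCycleType_of_coprime hs hs_one,
    bind_powCycleType_map_mul_left hk ht_one, hπ]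

end Gluing

theorem square_criterion_in_symmetric_group_general (π : Equiv.Perm α) {p : ℕ} (hp : p.Prime) :
    (∃ σ : Equiv.Perm α, σ ^ p = π) ↔ ∀ l : ℕ, p ∣ l → p ∣ π.cycleType.count l := by
  constructor
  · rintro ⟨σ, rfl⟩ l hl
    exact dvd_count_cycleType_pow σ hl
  · intro h
    obtain ⟨t, ht⟩ := exists_eq_filter_not_add_nsmul π.cycleType (p ∣ ·) h
    refine exists_pow_eq_of_cycleType_eq_add_nsmul hp.pos ht fun n hn => ?_
    exact (hp.coprime_iff_not_dvd.2 (Multiset.mem_filter.1 hn).2).symm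

end Perm

theorem square_criterion_in_symmetric_group {α : Type*} [Fintype α] [DecidableEq α]
    (π : Equiv.Perm α) :
    (∃ σ : Equiv.Perm α, σ ^ 2 = π) ↔
      ∀ l : ℕ, Even l → Even (Multiset.count l (Equiv.Perm.cycleType π)) := by
  simpa only [even_iff_two_dvd] using
    square_criterion_in_symmetric_group_general π Nat.prime_two
end

section
/- Let n, k, m, a, b be natural numbers with k ≥ 1, m ≥ 1, a ≥ 1, b ≥ 1, and let g be an element of alternatingGroup (Fin n) whose cycle type consists only of cycles of the two even lengths 2*k and 2*m, namely Equiv.Perm.cycleType g = Multiset.replicate a (2*k) + Multiset.replicate b (2*m). Then g is a product of two squares from the alternating group: there exist h and t in alternatingGroup (Fin n) with g = h^2 * t^2. -/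
/-!
Every even permutation `g` is a product of two permutations of odd order, and an element of odd
order in a group is a square there. Cycles of odd length already have odd order. Since `g` is even,
its cycles of even length can be grouped into pairs, and a pair of lengths `p` and `q` satisfies
`(x y l₁ … lᵣ) (z z₁ … zₛ) = (z x y) (y l₁ … lᵣ z z₁ … zₛ)`,
whose right-hand side has cycles of lengths `3` and `p + q - 1`, both odd. The factors obtained this
way stay within the support of their pair, so those belonging to different pairs commute.
-/

open Equiv Equiv.Perm

section OddOrder

theorem exists_sq_eq_of_odd_orderOf {M : Type*} [Monoid M] {x : M} (hx : Odd (orderOf x)) :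
    ∃ y : M, y ^ 2 = x := by
  obtain ⟨m, hm⟩ := exists_pow_eq_self_of_coprime hx.coprime_two_left
  exact ⟨x ^ m, by rw [← pow_mul', pow_mul, hm]⟩

theorem odd_orderOf_mul {M : Type*} [Monoid M] {x y : M} (h : Commute x y)
    (hx : Odd (orderOf x)) (hy : Odd (orderOf y)) : Odd (orderOf (x * y)) :=
  (hx.mul hy).of_dvd_nat h.orderOf_mul_dvd_mul_orderOf

variable {α : Type*} [DecidableEq α] [Fintype α]

theorem sign_eq_one_of_odd_orderOf {g : Perm α} (hg : Odd (orderOf g)) : sign g = 1 := by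
  obtain ⟨h, rfl⟩ := exists_sq_eq_of_odd_orderOf hg
  rw [map_pow, Int.units_sq]

theorem sign_eq_neg_one_of_isCycle_of_even_orderOf {c : Perm α} (hc : c.IsCycle)
    (h : Even (orderOf c)) : sign c = -1 := by
  rw [hc.sign, ← hc.orderOf, h.neg_one_pow]

theorem exists_alternatingGroup_sq_eq {g : Perm α} (hg : Odd (orderOf g)) :
    ∃ h : alternatingGroup α, (h : Perm α) ^ 2 = g := by
  lift g to alternatingGroup α using sign_eq_one_of_odd_orderOf hg
  rw [Subgroup.orderOf_coe] at hg
  obtain ⟨h, rfl⟩ := exists_sq_eq_of_odd_orderOf hg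
  exact ⟨h, rfl⟩

end OddOrder

section FormPerm

variable {α : Type*} [DecidableEq α]

theorem formPerm_append_cons (z : α) (zs : List α) : ∀ l : List α,
    (l ++ z :: zs).formPerm = (l ++ [z]).formPerm * (z :: zs).formPerm
  | [] => by simp
  | [x] => by simp
  | x :: y :: l => by
    simpa only [List.cons_append, List.formPerm_cons_cons, mul_assoc, mul_right_inj] using
      formPerm_append_cons z zs (y :: l)

theorem formPerm_mul_formPerm_eq_swap_mul {x z : α} {l : List α} (h : (z :: x :: l).Nodup)
    (zs : List α) :
    (x :: l).formPerm * (z :: zs).formPerm = swap z x * (x :: l ++ z :: zs).formPerm := by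
  have rotate : (x :: l ++ [z]).formPerm = swap z x * (x :: l).formPerm := by
    simpa using List.formPerm_rotate_one (z :: x :: l) h
  rw [formPerm_append_cons, rotate, mul_assoc, swap_mul_self_mul]

theorem formPerm_mul_formPerm_eq_threeCycle_mul {x y z : α} {l : List α}
    (h : (z :: x :: y :: l).Nodup) (zs : List α) :
    (x :: y :: l).formPerm * (z :: zs).formPerm =
      [z, x, y].formPerm * (y :: l ++ z :: zs).formPerm := by
  rw [formPerm_mul_formPerm_eq_swap_mul h]
  simp only [List.cons_append, List.formPerm_cons_cons, List.formPerm_singleton, mul_one, mul_assoc]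

theorem odd_orderOf_formPerm {l : List α} (h : l.Nodup) (hl : Odd l.length) :
    Odd (orderOf l.formPerm) :=
  hl.of_dvd_nat (orderOf_dvd_of_pow_eq_one (List.formPerm_pow_length_eq_one_of_nodup l h))

variable [Fintype α]

theorem exists_list_of_isCycle {c : Perm α} (hc : c.IsCycle) :
    ∃ l : List α, l.Nodup ∧ l.formPerm = c ∧ l.toFinset = c.support ∧ l.length = orderOf c := by
  obtain ⟨x, hx, -⟩ := id hc
  have hform : (toList c x).formPerm = c := by rw [formPerm_toList, hc.cycleOf_eq hx]
  refine ⟨toList c x, nodup_toList c x, hform, ?_, ?_⟩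
  · rw [← List.support_formPerm_of_nodup _ (nodup_toList c x) (toList_ne_singleton c x), hform]
  · rw [length_toList, hc.cycleOf_eq hx, hc.orderOf]

end FormPerm

variable {α : Type*} [DecidableEq α] [Fintype α]

/-- `g` is a product of two permutations of odd order whose supports are contained in that of `g`.
The support condition makes the property compatible with products of disjoint permutations. -/
def HasOddOrderFactorization (g : Perm α) : Prop :=
  ∃ x y : Perm α, Odd (orderOf x) ∧ Odd (orderOf y) ∧ x.support ⊆ g.support ∧
    y.support ⊆ g.support ∧ x * y = g

namespace HasOddOrderFactorization

theorem of_odd_orderOf {g : Perm α} (hg : Odd (orderOf g)) : HasOddOrderFactorization g :=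
  ⟨g, 1, hg, by simp, Finset.Subset.refl _, by simp, mul_one g⟩

theorem sign_eq_one {g : Perm α} (hg : HasOddOrderFactorization g) : sign g = 1 := by
  obtain ⟨x, y, hx, hy, -, -, rfl⟩ := hg
  rw [Perm.sign_mul, sign_eq_one_of_odd_orderOf hx, sign_eq_one_of_odd_orderOf hy, mul_one]

theorem mul_of_disjoint {g h : Perm α} (hg : HasOddOrderFactorization g)
    (hh : HasOddOrderFactorization h) (hgh : g.Disjoint h) : HasOddOrderFactorization (g * h) := by
  obtain ⟨x, y, hx, hy, hxg, hyg, hxy⟩ := hg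
  obtain ⟨u, v, hu, hv, huh, hvh, huv⟩ := hh
  refine ⟨x * u, y * v, odd_orderOf_mul (hgh.mono hxg huh).commute hx hu,
    odd_orderOf_mul (hgh.mono hyg hvh).commute hy hv, ?_, ?_, ?_⟩
  · rw [hgh.support_mul]
    exact (support_mul_le x u).trans (Finset.union_subset_union hxg huh)
  · rw [hgh.support_mul]
    exact (support_mul_le y v).trans (Finset.union_subset_union hyg hvh)
  · rw [(hgh.mono hyg huh).commute.symm.mul_mul_mul_comm, hxy, huv]

theorem mul_of_isCycle_of_even {c d : Perm α} (hc : c.IsCycle) (hd : d.IsCycle)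
    (hcd : c.Disjoint d) (hc_even : Even (orderOf c)) (hd_even : Even (orderOf d)) :
    HasOddOrderFactorization (c * d) := by
  obtain ⟨l, hl, hlc, hl_supp, hl_len⟩ := exists_list_of_isCycle hc
  obtain ⟨m, hm, hmd, hm_supp, hm_len⟩ := exists_list_of_isCycle hd
  have hc_two : 2 ≤ orderOf c := hc.orderOf ▸ hc.two_le_card_support
  have hd_two : 2 ≤ orderOf d := hd.orderOf ▸ hd.two_le_card_support
  have hdisj : l.Disjoint m := by
    rw [← List.disjoint_toFinset_iff_disjoint, hl_supp, hm_supp]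
    exact hcd.disjoint_support
  have hsupp : (l ++ m).toFinset = (c * d).support := by
    rw [List.toFinset_append, hl_supp, hm_supp, hcd.support_mul]
  have hlm : (l ++ m).Nodup := List.nodup_append'.2 ⟨hl, hm, hdisj⟩
  have supp_le {k : List α} (hk : k ⊆ l ++ m) : k.formPerm.support ⊆ (c * d).support :=
    (List.support_formPerm_le k).trans fun u hu =>
      hsupp ▸ List.mem_toFinset.2 (hk (List.mem_toFinset.1 hu))
  match l, m with
  | x :: y :: l, z :: zs =>
    have hz : (z :: x :: y :: l).Nodup :=
      List.nodup_cons.2 ⟨fun h => hdisj h List.mem_cons_self, hl⟩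
    have h_len : Odd (y :: l ++ z :: zs).length := by
      rw [← hl_len] at hc_even
      rw [← hm_len] at hd_even
      simp only [List.length_cons, List.length_append] at hc_even hd_even ⊢
      grind
    refine ⟨[z, x, y].formPerm, (y :: l ++ z :: zs).formPerm,
      odd_orderOf_formPerm (hz.sublist (by simp)) ⟨1, rfl⟩,
      odd_orderOf_formPerm hlm.of_cons h_len,
      supp_le (by simp), supp_le (List.subset_cons_self _ _), ?_⟩
    rw [← formPerm_mul_formPerm_eq_threeCycle_mul hz, hlc, hmd]
  | [], _ | [_], _ | _, [] =>
    simp only [List.length_cons, List.length_nil] at hl_len hm_len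
    omega

end HasOddOrderFactorization

theorem hasOddOrderFactorization_or_exists_isCycle (g : Perm α) :
    HasOddOrderFactorization g ∨ ∃ e c : Perm α, HasOddOrderFactorization e ∧ c.IsCycle ∧
      Even (orderOf c) ∧ e.Disjoint c ∧ e * c = g := by
  have one : HasOddOrderFactorization (1 : Perm α) := .of_odd_orderOf (by simp)
  induction g using cycle_induction_on with
  | base_one => exact .inl one
  | base_cycles c hc =>
    rcases (orderOf c).even_or_odd with hc_even | hc_odd
    · exact .inr ⟨1, c, one, hc, hc_even, disjoint_one_left c, one_mul c⟩
    · exact .inl (.of_odd_orderOf hc_odd)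
  | induction_disjoint c g hcg hc _ ih =>
    rcases ih with hg | ⟨e, d, he, hd, hd_even, hed, rfl⟩
    · rcases (orderOf c).even_or_odd with hc_even | hc_odd
      · exact .inr ⟨g, c, hg, hc, hc_even, hcg.symm, hcg.symm.commute.eq⟩
      · exact .inl ((HasOddOrderFactorization.of_odd_orderOf hc_odd).mul_of_disjoint hg hcg)
    · obtain ⟨hce, hcd⟩ : c.Disjoint e ∧ c.Disjoint d := by
        simpa only [disjoint_iff_disjoint_support, hed.support_mul, Finset.disjoint_union_right]
          using hcg
      rcases (orderOf c).even_or_odd with hc_even | hc_odd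
      · rw [← mul_assoc, hce.commute.eq, mul_assoc]
        exact .inl (he.mul_of_disjoint (.mul_of_isCycle_of_even hc hd hcd hc_even hd_even)
          (hce.symm.mul_right hed))
      · have hc_mul_e := (HasOddOrderFactorization.of_odd_orderOf hc_odd).mul_of_disjoint he hce
        exact .inr ⟨c * e, d, hc_mul_e, hd, hd_even, hcd.mul_left hed, mul_assoc c e d⟩

theorem hasOddOrderFactorization_iff_sign_eq_one {g : Perm α} :
    HasOddOrderFactorization g ↔ sign g = 1 := by
  refine ⟨HasOddOrderFactorization.sign_eq_one, fun hg => ?_⟩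
  rcases hasOddOrderFactorization_or_exists_isCycle g with h | ⟨e, c, he, hc, hc_even, -, rfl⟩
  · exact h
  · rw [Perm.sign_mul, he.sign_eq_one, sign_eq_neg_one_of_isCycle_of_even_orderOf hc hc_even] at hg
    exact absurd hg (by decide)

theorem even_cycle_type_is_product_of_two_squares_general (g : alternatingGroup α) :
    ∃ h t : alternatingGroup α, g = h ^ 2 * t ^ 2 := by
  obtain ⟨x, y, hx, hy, -, -, hxy⟩ :=
    hasOddOrderFactorization_iff_sign_eq_one.2 (mem_alternatingGroup.1 g.2)
  obtain ⟨h, rfl⟩ := exists_alternatingGroup_sq_eq hx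
  obtain ⟨t, rfl⟩ := exists_alternatingGroup_sq_eq hy
  exact ⟨h, t, Subtype.ext hxy.symm⟩

theorem even_cycle_type_is_product_of_two_squares (n k m a b : ℕ)
    (hk : 1 ≤ k) (hm : 1 ≤ m) (ha : 1 ≤ a) (hb : 1 ≤ b)
    (g : alternatingGroup (Fin n))
    (hg : Equiv.Perm.cycleType (g : Equiv.Perm (Fin n)) =
      Multiset.replicate a (2 * k) + Multiset.replicate b (2 * m)) :
    ∃ h t : alternatingGroup (Fin n), g = h ^ 2 * t ^ 2 :=
  even_cycle_type_is_product_of_two_squares_general g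
end
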